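/- Every Hamiltonian tour of the instance I³_{i,j,k} (with distances given by the 1-norm in ℝ³) has length at least 4 + 2/(i+1) + 2/(j+1) + 2/(k+1). -/

import Mathlib

open scoped Classical

/-- Manhattan (1-norm) distance in `ℝ³`. -/
noncomputable def dist1 (p q : ℝ × ℝ × ℝ) : ℝ :=
  |p.1 - q.1| + |p.2.1 - q.2.1| + |p.2.2 - q.2.2|

/-- The vertices `X_s` of the instance `I³_{i,j,k}`. -/
noncomputable def ptX (i s : ℕ) : ℝ × ℝ × ℝ := (0, 0, (s : ℝ) / ((i : ℝ) + 1))

/-- The vertices `Y_s` of the instance `I³_{i,j,k}`. -/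
noncomputable def ptY (i j s : ℕ) : ℝ × ℝ × ℝ :=
  (1 / ((i : ℝ) + 1) + 1 / ((j : ℝ) + 1), 0, (s : ℝ) / ((j : ℝ) + 1))

/-- The vertices `Z_s` of the instance `I³_{i,j,k}`. -/
noncomputable def ptZ (i k s : ℕ) : ℝ × ℝ × ℝ :=
  (1 / ((i : ℝ) + 1), 1 / ((k : ℝ) + 1), (s : ℝ) / ((k : ℝ) + 1))

/-- The point set of the instance `I³_{i,j,k}`. -/
noncomputable def I3pts (i j k : ℕ) : Finset (ℝ × ℝ × ℝ) :=
  (Finset.range (i + 2)).image (ptX i) ∪ (Finset.range (j + 2)).image (ptY i j) ∪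
    (Finset.range (k + 2)).image (ptZ i k)

/-- The length of the closed tour visiting the entries of `L` in cyclic order,
with respect to the distance function `d`. -/
def cycleLength {α : Type*} (d : α → α → ℝ) (L : List α) : ℝ :=
  ((L.zip (L.rotate 1)).map (fun p => d p.1 p.2)).sum

/-!
A point of one of the three columns sits at a height `s / K`, and two points of different columns
are at horizontal distance `1 / K + 1 / K'`, so the Manhattan distance is a combination of cut
semimetrics: one cut for each height and one for each column, the latter with weight `1 / K`. A
closed walk crosses every cut an even number of times.

Call a gap between consecutive points of a column *free* if the walk never crosses it by a step
inside the column. The free gaps split a column into blocks, and the walk must enter and leave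
each of them from outside the column: `f` free gaps force `2 * (f + 1)` crossings of the column
cut. At a fixed height, each column whose gap there is not free contributes a crossing of the
height cut, so with three columns and `f` free gaps there are at least `3 - f` crossings, and an
even number of them, whence at least `4 - 2 * f`. Summing over all cuts, the contributions of the
free gaps cancel: a free gap of a column loses `2 / K` in the height cuts and gains `2 / K` in the
column cut.
-/

open Finset

section ClosedLists

variable {α β : Type*}

/-- The periodic continuation of a nonempty list, used to index the steps of a closed tour by
natural numbers. -/
def cyclicGet (L : List α) (hL : L ≠ []) (t : ℕ) : α :=
  L[t % L.length]'(Nat.mod_lt _ (List.length_pos_iff.2 hL))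

lemma cyclicGet_of_lt {L : List α} (hL : L ≠ []) {t : ℕ} (ht : t < L.length) :
    cyclicGet L hL t = L[t] := by
  simp [cyclicGet, Nat.mod_eq_of_lt ht]

lemma cyclicGet_length (L : List α) (hL : L ≠ []) :
    cyclicGet L hL L.length = cyclicGet L hL 0 := by
  simp [cyclicGet]

lemma cyclicGet_mem (L : List α) (hL : L ≠ []) (t : ℕ) : cyclicGet L hL t ∈ L :=
  List.getElem_mem _

lemma exists_cyclicGet_eq {L : List α} (hL : L ≠ []) {a : α} (ha : a ∈ L) :
    ∃ t < L.length, cyclicGet L hL t = a := by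
  obtain ⟨t, ht, rfl⟩ := List.getElem_of_mem ha
  exact ⟨t, ht, cyclicGet_of_lt hL ht⟩

lemma cycleLength_eq_sum_cyclicGet (d : α → α → ℝ) (L : List α) (hL : L ≠ []) :
    cycleLength d L =
      ∑ t ∈ range L.length, d (cyclicGet L hL t) (cyclicGet L hL (t + 1)) := by
  have hsteps : (L.zip (L.rotate 1)).map (fun p => d p.1 p.2) =
      (List.range L.length).map (fun t => d (cyclicGet L hL t) (cyclicGet L hL (t + 1))) := by
    refine List.ext_getElem (by simp) fun t _ ht => ?_
    have ht' : t < L.length := by simpa using ht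
    simp [cyclicGet, List.getElem_rotate, Nat.mod_eq_of_lt ht']
  rw [cycleLength, hsteps]
  rfl

lemma cycleLength_map (d : β → β → ℝ) (f : α → β) (L : List α) :
    cycleLength d (L.map f) = cycleLength (fun a b => d (f a) (f b)) L := by
  simp [cycleLength, ← List.map_rotate, List.zip_map, Function.comp_def]

end ClosedLists

section Cuts

variable {V : Type*} {v : ℕ → V} {n : ℕ} {S : Set V}

/-- The cut semimetric of `S`: two points are at distance `1` if `S` separates them. -/
noncomputable def cutDist (S : Set V) (u w : V) : ℝ :=
  if u ∈ S ↔ w ∈ S then 0 else 1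

/-- The steps at which the walk `v 0, …, v n` enters or leaves `S`. Step `t` leads from `v t` to
`v (t + 1)`. -/
noncomputable def crossings (v : ℕ → V) (n : ℕ) (S : Set V) : Finset ℕ :=
  {t ∈ range n | ¬(v t ∈ S ↔ v (t + 1) ∈ S)}

lemma mem_crossings {t : ℕ} : t ∈ crossings v n S ↔ t < n ∧ ¬(v t ∈ S ↔ v (t + 1) ∈ S) := by
  simp [crossings]

lemma sum_cutDist (v : ℕ → V) (n : ℕ) (S : Set V) :
    ∑ t ∈ range n, cutDist S (v t) (v (t + 1)) = #(crossings v n S) := by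
  simp [cutDist, crossings, Finset.card_filter, ite_not]

lemma even_card_crossings_iff (v : ℕ → V) (n : ℕ) (S : Set V) :
    Even #(crossings v n S) ↔ (v 0 ∈ S ↔ v n ∈ S) := by
  induction n with
  | zero => simp [crossings]
  | succ n ih =>
    rw [crossings] at ih ⊢
    rw [range_add_one, filter_insert]
    split_ifs with hcross
    · rw [ih]
      tauto
    · rw [card_insert_of_notMem (by simp), Nat.even_add_one, ih]
      tauto

lemma even_card_crossings (hv : v n = v 0) (S : Set V) : Even #(crossings v n S) := by
  rw [even_card_crossings_iff, hv]

lemma mem_iff_of_crossings_eq_empty (h : crossings v n S = ∅) {t : ℕ} (ht : t ≤ n) :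
    v t ∈ S ↔ v 0 ∈ S := by
  induction t with
  | zero => rfl
  | succ t ih =>
    have hstep : t ∉ crossings v n S := by simp [h]
    rw [← ih (by lia), ← not_not (a := _ ↔ _)]
    exact fun hne => hstep (mem_crossings.2 ⟨ht, fun h' => hne h'.symm⟩)

lemma two_le_card_crossings (hv : v n = v 0) (hin : ∃ t < n, v t ∈ S)
    (hout : ∃ t < n, v t ∉ S) : 2 ≤ #(crossings v n S) := by
  have hne : #(crossings v n S) ≠ 0 := by
    intro h
    obtain ⟨t, ht, hmem⟩ := hin
    obtain ⟨t', ht', hnotMem⟩ := hout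
    have hconst {t : ℕ} := mem_iff_of_crossings_eq_empty (t := t) (card_eq_zero.1 h)
    exact hnotMem ((hconst ht'.le).2 ((hconst ht.le).1 hmem))
  obtain ⟨r, hr⟩ := even_card_crossings hv S
  lia

lemma disjoint_crossings {B B' C : Set V} (hdisj : Disjoint B B') (hB : B ⊆ C) (hB' : B' ⊆ C)
    (hcross : crossings v n B ⊆ crossings v n C) :
    Disjoint (crossings v n B) (crossings v n B') := by
  rw [Finset.disjoint_left]
  intro t ht ht'
  -- One end of step `t` lies outside `C`, so the other end lies in both `B` and `B'`.
  have htC := (mem_crossings.1 (hcross ht)).2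
  have htB := (mem_crossings.1 ht).2
  have htB' := (mem_crossings.1 ht').2
  have hnot (u : V) : ¬(u ∈ B ∧ u ∈ B') := fun h => Set.disjoint_left.1 hdisj h.1 h.2
  have := hnot (v t)
  have := hnot (v (t + 1))
  have := @hB (v t)
  have := @hB (v (t + 1))
  have := @hB' (v t)
  have := @hB' (v (t + 1))
  tauto

lemma two_mul_card_le_card_crossings {κ : Type*} {Z : Finset κ} {B : κ → Set V} {C : Set V}
    (hv : v n = v 0) (hdisj : (Z : Set κ).PairwiseDisjoint B) (hsub : ∀ s ∈ Z, B s ⊆ C)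
    (hcross : ∀ s ∈ Z, crossings v n (B s) ⊆ crossings v n C)
    (hin : ∀ s ∈ Z, ∃ t < n, v t ∈ B s) (hout : ∃ t < n, v t ∉ C) :
    2 * #Z ≤ #(crossings v n C) := by
  obtain ⟨t, ht, htC⟩ := hout
  calc 2 * #Z = ∑ _s ∈ Z, 2 := by rw [sum_const, smul_eq_mul, mul_comm]
    _ ≤ ∑ s ∈ Z, #(crossings v n (B s)) := sum_le_sum fun s hs =>
        two_le_card_crossings hv (hin s hs) ⟨t, ht, fun h => htC (hsub s hs h)⟩
    _ = #(Z.biUnion fun s => crossings v n (B s)) := (card_biUnion fun s hs s' hs' hne =>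
        disjoint_crossings (hdisj hs hs' hne) (hsub s hs) (hsub s' hs') (hcross s hs)).symm
    _ ≤ #(crossings v n C) := card_le_card (biUnion_subset.2 hcross)

end Cuts

section Columns

variable {ι : Type*} {K A : ι → ℕ} {N n : ℕ} {v : ℕ → ι × ℕ} {c : ι}

/-- The distance on columns `c` of vertices `(c, 0), …, (c, K c)`, where `(c, s)` has height
`s / K c` and distinct columns `c` and `d` are at horizontal distance `1 / K c + 1 / K d`. -/
noncomputable def columnDist (K : ι → ℕ) (u w : ι × ℕ) : ℝ :=
  |(u.2 : ℝ) / K u.1 - w.2 / K w.1| + if u.1 = w.1 then 0 else 1 / (K u.1 : ℝ) + 1 / K w.1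

/-- A closed walk `v 0, …, v n` on the vertices `(c, s)` with `s ≤ K c` that visits each of them
at least once. -/
structure IsColumnTour (K : ι → ℕ) (v : ℕ → ι × ℕ) (n : ℕ) : Prop where
  closed : v n = v 0
  snd_le : ∀ t, (v t).2 ≤ K (v t).1
  exists_eq : ∀ u : ι × ℕ, u.2 ≤ K u.1 → ∃ t < n, v t = u

/-- The cut separating column `c` from the others. -/
def column (c : ι) : Set (ι × ℕ) := {u | u.1 = c}

/-- The horizontal cut at integer level `m`. Consecutive vertices of column `c` are `A c` levels
apart, heights being scaled by a common multiple of the `K c` to make all levels integers. -/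
def lowerCut (A : ι → ℕ) (m : ℕ) : Set (ι × ℕ) := {u | u.2 * A u.1 ≤ m}

/-- The gap of column `c` between the vertices `s` and `s + 1` is free if no step of the walk
inside the column crosses it. -/
def IsFreeGap (v : ℕ → ι × ℕ) (n : ℕ) (c : ι) (s : ℕ) : Prop :=
  ∀ t < n, (v t).1 = c → (v (t + 1)).1 = c → ((v t).2 ≤ s ↔ (v (t + 1)).2 ≤ s)

/-- The block of column `c` with top vertex `s`: the vertices whose first free gap above is the
one at `s`. -/
def gapBlock (v : ℕ → ι × ℕ) (n : ℕ) (c : ι) (s : ℕ) : Set (ι × ℕ) :=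
  {u | u.1 = c ∧ IsLeast {r | IsFreeGap v n c r ∧ u.2 ≤ r} s}

lemma gapBlock_subset_column (v : ℕ → ι × ℕ) (n : ℕ) (c : ι) (s : ℕ) :
    gapBlock v n c s ⊆ column c := fun _ hu => hu.1

lemma disjoint_gapBlock {s s' : ℕ} (hne : s ≠ s') :
    Disjoint (gapBlock v n c s) (gapBlock v n c s') :=
  Set.disjoint_left.2 fun _ hu hu' => hne (hu.2.unique hu'.2)

lemma mk_mem_gapBlock {s : ℕ} (hs : IsFreeGap v n c s) : (c, s) ∈ gapBlock v n c s :=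
  ⟨rfl, ⟨hs, le_rfl⟩, fun _ hr => hr.2⟩

lemma crossings_gapBlock_subset (v : ℕ → ι × ℕ) (n : ℕ) (c : ι) (s : ℕ) :
    crossings v n (gapBlock v n c s) ⊆ crossings v n (column c) := by
  intro t ht
  obtain ⟨htn, hblock⟩ := mem_crossings.1 ht
  refine mem_crossings.2 ⟨htn, fun hcol => hblock ?_⟩
  by_cases hc : (v t).1 = c
  · have hc' : (v (t + 1)).1 = c := hcol.1 hc
    have hgaps : {r | IsFreeGap v n c r ∧ (v t).2 ≤ r} =
        {r | IsFreeGap v n c r ∧ (v (t + 1)).2 ≤ r} :=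
      Set.ext fun r => and_congr_right fun hr => hr t htn hc hc'
    simp only [gapBlock, Set.mem_ofPred_eq, hc, hc', hgaps]
  · have hc' : (v (t + 1)).1 ≠ c := fun h => hc (hcol.2 h)
    simp only [gapBlock, Set.mem_ofPred_eq, hc, hc', false_and]

lemma IsColumnTour.isFreeGap_top (hv : IsColumnTour K v n) (c : ι) :
    IsFreeGap v n c (K c) := by
  rintro t - rfl hc
  exact iff_of_true (hv.snd_le t) (hc ▸ hv.snd_le (t + 1))

lemma IsColumnTour.le_card_crossings_column [Nontrivial ι] (hv : IsColumnTour K v n) (c : ι) :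
    2 * #{s ∈ range (K c) | IsFreeGap v n c s} + 2 ≤ #(crossings v n (column c)) := by
  have hcard : #{s ∈ range (K c + 1) | IsFreeGap v n c s} =
      #{s ∈ range (K c) | IsFreeGap v n c s} + 1 := by
    rw [range_add_one, filter_insert, if_pos (hv.isFreeGap_top c),
      card_insert_of_notMem (by simp)]
  rw [← mul_add_one, ← hcard]
  refine two_mul_card_le_card_crossings (B := gapBlock v n c) hv.closed
    (fun _ _ _ _ hne => disjoint_gapBlock hne) (fun s _ => gapBlock_subset_column v n c s)
    (fun s _ => crossings_gapBlock_subset v n c s) (fun s hs => ?_) ?_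
  · obtain ⟨hsK, hs⟩ := mem_filter.1 hs
    obtain ⟨t, ht, htv⟩ := hv.exists_eq (c, s) (mem_range_succ_iff.1 hsK)
    exact ⟨t, ht, htv ▸ mk_mem_gapBlock hs⟩
  · obtain ⟨c', hc'⟩ := exists_ne c
    obtain ⟨t, ht, htv⟩ := hv.exists_eq (c', 0) (Nat.zero_le _)
    exact ⟨t, ht, htv ▸ hc'⟩

lemma exists_mem_crossings_lowerCut (hA : 0 < A c) {m : ℕ}
    (hgap : ¬IsFreeGap v n c (m / A c)) :
    ∃ t ∈ crossings v n (lowerCut A m), (v t).1 = c := by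
  simp only [IsFreeGap, not_forall] at hgap
  obtain ⟨t, ht, hc, hc', hne⟩ := hgap
  refine ⟨t, mem_crossings.2 ⟨ht, ?_⟩, hc⟩
  simpa only [lowerCut, Set.mem_ofPred_eq, hc, hc', ← Nat.le_div_iff_mul_le hA] using hne

lemma le_card_crossings_lowerCut [Fintype ι] (hA : ∀ c, 0 < A c) (hv : v n = v 0) (m : ℕ) :
    Fintype.card ι + Fintype.card ι % 2 ≤
      #(crossings v n (lowerCut A m)) + 2 * #{c | IsFreeGap v n c (m / A c)} := by
  have hblocked : #{c | ¬IsFreeGap v n c (m / A c)} ≤ #(crossings v n (lowerCut A m)) := by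
    refine (card_le_card fun c hc => ?_).trans (card_image_le (f := fun t => (v t).1))
    exact mem_image.2 (exists_mem_crossings_lowerCut (hA c) (mem_filter.1 hc).2)
  have hsplit := card_filter_add_card_filter_not (s := (univ : Finset ι))
    (fun c => IsFreeGap v n c (m / A c))
  obtain ⟨r, hr⟩ := even_card_crossings hv (lowerCut A m)
  rw [card_univ] at hsplit
  lia

lemma sum_range_mul_div {M : Type*} [AddCommMonoid M] (f : ℕ → M) (k : ℕ) {a : ℕ} (ha : 0 < a) :
    ∑ m ∈ range (k * a), f (m / a) = a • ∑ s ∈ range k, f s := by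
  induction k with
  | zero => simp
  | succ k ih =>
    have hlast : ∀ r ∈ range a, f ((k * a + r) / a) = f k := fun r hr => by
      rw [mul_comm, Nat.mul_add_div ha, Nat.div_eq_of_lt (mem_range.1 hr), add_zero]
    rw [Nat.succ_mul, sum_range_add, ih, sum_congr rfl hlast, sum_const, card_range,
      sum_range_succ, smul_add]

lemma sum_card_filter_div [Fintype ι] (hA : ∀ c, 0 < A c) (hN : ∀ c, K c * A c = N)
    (P : ι → ℕ → Prop) :
    ∑ m ∈ range N, #{c | P c (m / A c)} = ∑ c, A c * #{s ∈ range (K c) | P c s} := by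
  simp_rw [card_filter]
  rw [sum_comm]
  refine sum_congr rfl fun c _ => ?_
  rw [← hN c, sum_range_mul_div (fun s => if P c s then 1 else 0) (K c) (hA c), smul_eq_mul]

lemma IsColumnTour.le_sum_card_crossings [Fintype ι] [Nontrivial ι] (hv : IsColumnTour K v n)
    (hA : ∀ c, 0 < A c) (hN : ∀ c, K c * A c = N) :
    N * (Fintype.card ι + Fintype.card ι % 2) + 2 * ∑ c, A c ≤
      ∑ m ∈ range N, #(crossings v n (lowerCut A m)) +
        ∑ c, A c * #(crossings v n (column c)) := by
  have hlevels := sum_le_sum fun m (_ : m ∈ range N) => le_card_crossings_lowerCut hA hv.closed m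
  have hcolumns := sum_le_sum fun c (_ : c ∈ univ) =>
    Nat.mul_le_mul_left (A c) (hv.le_card_crossings_column c)
  rw [sum_const, card_range, smul_eq_mul, sum_add_distrib, ← mul_sum,
    sum_card_filter_div hA hN] at hlevels
  simp only [mul_add, mul_left_comm _ 2, mul_comm _ 2, sum_add_distrib, ← mul_sum] at hcolumns
  lia

lemma cutDist_Iic (x y m : ℕ) :
    cutDist (Set.Iic m) x y = if m ∈ Ico (min x y) (max x y) then 1 else 0 := by
  have hIco : m ∈ Ico (min x y) (max x y) ↔ ¬(x ≤ m ↔ y ≤ m) := by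
    rw [mem_Ico]
    lia
  simp only [cutDist, Set.mem_Iic, hIco, ite_not]

lemma sum_cutDist_Iic {x y N : ℕ} (hx : x ≤ N) (hy : y ≤ N) :
    ∑ m ∈ range N, cutDist (Set.Iic m) x y = |(x : ℝ) - y| := by
  have hsub : Ico (min x y) (max x y) ⊆ range N := fun m hm =>
    mem_range.2 ((mem_Ico.1 hm).2.trans_le (max_le hx hy))
  simp_rw [cutDist_Iic]
  rw [sum_boole, filter_mem_eq_inter, inter_eq_right.2 hsub, Nat.card_Ico,
    Nat.cast_sub min_le_max, Nat.cast_max, Nat.cast_min, max_sub_min_eq_abs']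

lemma sum_mul_cutDist_column [Fintype ι] (a : ι → ℝ) (u w : ι × ℕ) :
    ∑ c, a c * cutDist (column c) u w = if u.1 = w.1 then 0 else a u.1 + a w.1 := by
  split_ifs with h
  · simp [cutDist, column, h]
  · have hcut (c : ι) : a c * cutDist (column c) u w =
        (if u.1 = c then a c else 0) + if w.1 = c then a c else 0 := by
      rw [cutDist]
      by_cases hu : u.1 = c <;> by_cases hw : w.1 = c <;> simp_all [column]
    simp [hcut, sum_add_distrib]

lemma mul_columnDist [Fintype ι] (hK : ∀ c, 0 < K c) (hN : ∀ c, K c * A c = N) {u w : ι × ℕ}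
    (hu : u.2 ≤ K u.1) (hw : w.2 ≤ K w.1) :
    N * columnDist K u w =
      ∑ m ∈ range N, cutDist (lowerCut A m) u w + ∑ c, A c * cutDist (column c) u w := by
  have hdiv (c : ι) (x : ℝ) : N * (x / K c) = x * A c := by
    have : (K c : ℝ) ≠ 0 := by exact_mod_cast (hK c).ne'
    rw [← hN c]
    push_cast
    field_simp
  have hle {u : ι × ℕ} (hu : u.2 ≤ K u.1) : u.2 * A u.1 ≤ N :=
    hN u.1 ▸ Nat.mul_le_mul_right _ hu
  have hlower : ∑ m ∈ range N, cutDist (lowerCut A m) u w =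
      |(u.2 * A u.1 : ℝ) - w.2 * A w.1| := by
    exact_mod_cast sum_cutDist_Iic (hle hu) (hle hw)
  rw [hlower, sum_mul_cutDist_column, columnDist, mul_add,
    ← Nat.abs_cast N, ← abs_mul, Nat.abs_cast, mul_sub, mul_ite, mul_add]
  simp only [hdiv, mul_zero, one_mul]

lemma IsColumnTour.mul_sum_columnDist [Fintype ι] (hv : IsColumnTour K v n)
    (hK : ∀ c, 0 < K c) (hN : ∀ c, K c * A c = N) :
    N * ∑ t ∈ range n, columnDist K (v t) (v (t + 1)) =
      ∑ m ∈ range N, (#(crossings v n (lowerCut A m)) : ℝ) +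
        ∑ c, A c * (#(crossings v n (column c)) : ℝ) := by
  simp_rw [mul_sum, mul_columnDist hK hN (hv.snd_le _) (hv.snd_le _), sum_add_distrib,
    ← sum_cutDist, mul_sum]
  rw [sum_comm, sum_comm (s := range n) (t := univ)]

lemma IsColumnTour.le_sum_columnDist [Fintype ι] [Nontrivial ι] (hv : IsColumnTour K v n)
    (hK : ∀ c, 0 < K c) :
    ((Fintype.card ι + Fintype.card ι % 2 : ℕ) : ℝ) + ∑ c, 2 / (K c : ℝ) ≤
      ∑ t ∈ range n, columnDist K (v t) (v (t + 1)) := by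
  obtain ⟨N, hNpos, hdvd⟩ : ∃ N, 0 < N ∧ ∀ c, K c ∣ N :=
    ⟨∏ c, K c, prod_pos fun c _ => hK c, fun c => dvd_prod_of_mem K (mem_univ c)⟩
  choose A hN using hdvd
  have hA (c : ι) : 0 < A c := Nat.pos_of_mul_pos_left (hN c ▸ hNpos)
  have hcount := hv.le_sum_card_crossings hA fun c => (hN c).symm
  have hdiv (c : ι) : (N : ℝ) * (2 / K c) = 2 * A c := by
    have : (K c : ℝ) ≠ 0 := by exact_mod_cast (hK c).ne'
    rw [hN c]
    push_cast
    field_simp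
  refine le_of_mul_le_mul_left ?_ (Nat.cast_pos.2 hNpos : (0 : ℝ) < N)
  rw [hv.mul_sum_columnDist hK fun c => (hN c).symm, mul_add, mul_sum]
  simp_rw [hdiv, ← mul_sum]
  exact_mod_cast hcount

lemma isColumnTour_cyclicGet {M : List (ι × ℕ)} (hM : ∀ u, u ∈ M ↔ u.2 ≤ K u.1) (hne : M ≠ []) :
    IsColumnTour K (cyclicGet M hne) M.length where
  closed := cyclicGet_length M hne
  snd_le t := (hM _).1 (cyclicGet_mem M hne t)
  exists_eq _ hu := exists_cyclicGet_eq hne ((hM _).2 hu)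

theorem le_cycleLength_columnDist [Fintype ι] [Nontrivial ι] (hK : ∀ c, 0 < K c)
    {M : List (ι × ℕ)} (hM : ∀ u, u ∈ M ↔ u.2 ≤ K u.1) :
    ((Fintype.card ι + Fintype.card ι % 2 : ℕ) : ℝ) + ∑ c, 2 / (K c : ℝ) ≤
      cycleLength (columnDist K) M := by
  obtain ⟨c⟩ := (inferInstance : Nonempty ι)
  have hne : M ≠ [] := List.ne_nil_of_mem ((hM (c, 0)).2 (Nat.zero_le _))
  rw [cycleLength_eq_sum_cyclicGet _ M hne]
  exact (isColumnTour_cyclicGet hM hne).le_sum_columnDist hK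

lemma eq_of_columnDist_eq_zero (hK : ∀ c, 0 < K c) {u w : ι × ℕ} (h : columnDist K u w = 0) :
    u = w := by
  have hpos (c : ι) : (0 : ℝ) < K c := Nat.cast_pos.2 (hK c)
  have hheight := abs_nonneg ((u.2 : ℝ) / K u.1 - w.2 / K w.1)
  obtain ⟨c, s⟩ := u
  obtain ⟨d, r⟩ := w
  obtain rfl : c = d := by
    by_contra hne
    have := one_div_pos.2 (hpos c)
    have := one_div_pos.2 (hpos d)
    simp only [columnDist, hne, if_false] at h hheight
    linarith
  rw [columnDist, if_pos rfl, add_zero, abs_eq_zero, sub_eq_zero,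
    div_left_inj' (hpos c).ne', Nat.cast_inj] at h
  rw [Prod.mk.injEq]
  exact ⟨rfl, h⟩

end Columns

section Instance

/-- The numbers of gaps in the three columns `X`, `Y`, `Z` of `I³_{i,j,k}`. -/
def I3Gaps (i j k : ℕ) : Fin 3 → ℕ := ![i + 1, j + 1, k + 1]

/-- The point of `I³_{i,j,k}` with a given column (`0`, `1`, `2` for `X`, `Y`, `Z`) and index. -/
noncomputable def I3Point (i j k : ℕ) (u : Fin 3 × ℕ) : ℝ × ℝ × ℝ :=
  ![ptX i u.2, ptY i j u.2, ptZ i k u.2] u.1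

-- The columns stand at the ends of a star in the `ℓ¹` plane with center `(a 0, 0)` and legs `a c`.
lemma abs_sub_add_abs_sub_star {a : Fin 3 → ℝ} (ha : ∀ c, 0 ≤ a c) (c d : Fin 3) :
    |![0, a 0 + a 1, a 0] c - ![0, a 0 + a 1, a 0] d| + |![0, 0, a 2] c - ![0, 0, a 2] d| =
      if c = d then 0 else a c + a d := by
  fin_cases c <;> fin_cases d <;>
    simp only [Fin.zero_eta, Fin.mk_one, Fin.reduceFinMk, Matrix.cons_val] <;> grind

variable (i j k : ℕ)

lemma I3Gaps_pos (c : Fin 3) : 0 < I3Gaps i j k c := by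
  fin_cases c <;> simp [I3Gaps]

lemma I3Point_height (u : Fin 3 × ℕ) :
    (I3Point i j k u).2.2 = (u.2 : ℝ) / I3Gaps i j k u.1 := by
  obtain ⟨c, s⟩ := u
  fin_cases c <;> simp [I3Point, I3Gaps, ptX, ptY, ptZ]

lemma I3Point_horizontal (u : Fin 3 × ℕ) :
    (I3Point i j k u).1 = ![0, 1 / (I3Gaps i j k 0 : ℝ) + 1 / I3Gaps i j k 1,
      1 / (I3Gaps i j k 0 : ℝ)] u.1 ∧
    (I3Point i j k u).2.1 = ![0, 0, 1 / (I3Gaps i j k 2 : ℝ)] u.1 := by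
  obtain ⟨c, s⟩ := u
  fin_cases c <;> simp [I3Point, I3Gaps, ptX, ptY, ptZ]

lemma dist1_I3Point (u w : Fin 3 × ℕ) :
    dist1 (I3Point i j k u) (I3Point i j k w) = columnDist (I3Gaps i j k) u w := by
  have hstar := abs_sub_add_abs_sub_star (a := fun c => 1 / (I3Gaps i j k c : ℝ))
    (fun c => by positivity) u.1 w.1
  rw [dist1, columnDist, I3Point_height, I3Point_height, add_comm]
  simp only [I3Point_horizontal]
  congr 1
  convert hstar

lemma I3Point_injective : Function.Injective (I3Point i j k) := fun u w h =>
  eq_of_columnDist_eq_zero (I3Gaps_pos i j k) (by rw [← dist1_I3Point, h]; simp [dist1])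

lemma mem_I3pts_iff {p : ℝ × ℝ × ℝ} :
    p ∈ I3pts i j k ↔ ∃ u : Fin 3 × ℕ, u.2 ≤ I3Gaps i j k u.1 ∧ I3Point i j k u = p := by
  simp [I3pts, I3Gaps, I3Point, Fin.exists_fin_succ, Nat.lt_succ_iff]

lemma I3Point_mem_I3pts_iff {u : Fin 3 × ℕ} :
    I3Point i j k u ∈ I3pts i j k ↔ u.2 ≤ I3Gaps i j k u.1 := by
  simp [mem_I3pts_iff, (I3Point_injective i j k).eq_iff]

end Instance

theorem I3_tour_lower_bound_general (i j k : ℕ) (L : List (ℝ × ℝ × ℝ))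
    (hcover : L.toFinset = I3pts i j k) :
    4 + 2 / ((i : ℝ) + 1) + 2 / ((j : ℝ) + 1) + 2 / ((k : ℝ) + 1) ≤ cycleLength dist1 L := by
  have hL (p : ℝ × ℝ × ℝ) : p ∈ L ↔ p ∈ I3pts i j k := by rw [← hcover, List.mem_toFinset]
  obtain ⟨M, rfl⟩ : ∃ M : List (Fin 3 × ℕ), M.map (I3Point i j k) = L := by
    rw [← Set.mem_range, Set.range_list_map]
    exact fun p hp => ((mem_I3pts_iff i j k).1 ((hL p).1 hp)).imp fun _ hu => hu.2
  have hM (u : Fin 3 × ℕ) : u ∈ M ↔ u.2 ≤ I3Gaps i j k u.1 := by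
    rw [← I3Point_mem_I3pts_iff, ← hL, List.mem_map_of_injective (I3Point_injective i j k)]
  have hbound := le_cycleLength_columnDist (I3Gaps_pos i j k) hM
  simp only [cycleLength_map, dist1_I3Point]
  have hgaps : ∑ c, 2 / (I3Gaps i j k c : ℝ) =
      2 / ((i : ℝ) + 1) + 2 / ((j : ℝ) + 1) + 2 / ((k : ℝ) + 1) := by
    simp [I3Gaps, Fin.sum_univ_three]
  rw [hgaps, Fintype.card_fin] at hbound
  norm_num only at hbound
  linarith

/-- Every Hamiltonian tour of `I³_{i,j,k}` has length at least
`4 + 2/(i+1) + 2/(j+1) + 2/(k+1)`. -/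
theorem I3_tour_lower_bound (i j k : ℕ) (L : List (ℝ × ℝ × ℝ))
    (hnodup : L.Nodup) (hcover : L.toFinset = I3pts i j k) :
    4 + 2 / ((i : ℝ) + 1) + 2 / ((j : ℝ) + 1) + 2 / ((k : ℝ) + 1) ≤ cycleLength dist1 L :=
  I3_tour_lower_bound_general i j k L hcover
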